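/- Let f : ℝ → ℝ be continuous with f(t) ≥ 0 for all t, and suppose that for every k ∈ ℕ the integral ∫_{t₀+2k}^{t₀+2(k+1)} f(t) φ(t - 1 - t₀ - 2k) dt is strictly positive, where φ is the standard smooth bump supported on (-1,1). Then for every K ∈ ℝ there exists an infinitely differentiable function ψ : ℝ → ℝ with ψ(t) = 0 for all t ≤ t₀ such that -∫_{t₀}^{t₀+2N} f(t) ψ(t) dt > K for some positive integer N. -/

import Mathlib

theorem stmt_19 (f : ℝ → ℝ) (hf : Continuous f) (hf0 : ∀ t, 0 ≤ f t) (t₀ : ℝ)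
    (phi : ℝ → ℝ)
    (hphi : ∀ t : ℝ, phi t = if -1 < t ∧ t < 1 then Real.exp (1 / (t ^ 2 - 1)) else 0)
    (hpos : ∀ k : ℕ,
      0 < ∫ t in (t₀ + 2 * k)..(t₀ + 2 * (k + 1)), f t * phi (t - 1 - t₀ - 2 * k)) :
    ∀ K : ℝ, ∃ ψ : ℝ → ℝ, ContDiff ℝ (⊤ : ℕ∞) ψ ∧ (∀ t ≤ t₀, ψ t = 0) ∧
      ∃ N : ℕ, 0 < N ∧ K < -∫ t in t₀..(t₀ + 2 * N), f t * ψ t := by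
  intro K
  have hphi' : phi = fun t => expNegInvGlue (1 - t ^ 2) := by
    funext t
    rw [hphi, expNegInvGlue]
    by_cases h : -1 < t ∧ t < 1
    · have h1 : ¬ (1 - t ^ 2 ≤ 0) := by nlinarith [h.1, h.2]
      rw [if_pos h, if_neg h1, one_div, ← inv_neg, neg_sub]
    · have h1 : 1 - t ^ 2 ≤ 0 := by
        by_contra h2
        exact h (abs_lt.mp ((sq_lt_one_iff_abs_lt_one t).mp (by linarith)))
      rw [if_neg h, if_pos h1]
  have hsm : ContDiff ℝ (⊤ : ℕ∞) phi := by
    rw [hphi']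
    exact expNegInvGlue.contDiff.comp (by fun_prop)
  have h0 := hpos 0
  simp only [Nat.cast_zero, mul_zero, add_zero, zero_add, mul_one, sub_zero] at h0
  set I := ∫ t in t₀..(t₀ + 2), f t * phi (t - 1 - t₀) with hI
  refine ⟨fun t => -((|K| + 1) / I) * phi (t - 1 - t₀), ?_, ?_, 1, one_pos, ?_⟩
  · exact contDiff_const.mul (hsm.comp (by fun_prop))
  · intro t ht
    have : phi (t - 1 - t₀) = 0 := by
      rw [hphi, if_neg]
      rintro ⟨h1, _⟩
      linarith
    simp [this]
  · have : ∫ t in t₀..(t₀ + 2 * ((1 : ℕ) : ℝ)), f t * (-((|K| + 1) / I) * phi (t - 1 - t₀))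
        = -((|K| + 1) / I) * I := by
      rw [hI, ← intervalIntegral.integral_const_mul]
      simp only [Nat.cast_one, mul_one]
      congr 1
      funext t
      ring
    rw [this, neg_mul, neg_neg, div_mul_cancel₀ _ h0.ne']
    linarith [le_abs_self K]
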